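/- Let (A,*,{·,·,·}) be a real pre-Lie-Yamaguti algebra and let aff(A) = A^c ⋉_{L,R} A be the semidirect product Lie-Yamaguti algebra of the sub-adjacent Lie-Yamaguti algebra A^c with the representation (A;L,R), L_x z = x*z, R(x,y)z = {z,x,y}. Then the pair (J,E) defined by J(x,y) = (−y,x) and E(x,y) = (x,−y) is a perfect complex product structure on aff(A). -/

import Mathlib

/-!
`E` is the parity operator of the grading of `aff(A)` with even part `A^c` and odd part the
abelian ideal `A`; the semidirect product brackets are even and vanish as soon as two arguments
are odd, so `E` is an automorphism and both of its eigenspaces are subalgebras.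

For `J`, the point is that the operator `D` attached to the representation `(L, R)` is exactly
`{·,·,·}_D` (`lyd_eq_preD`). Hence the brackets of `A^c` and the action on the ideal are built
from the same multilinear maps `*`, `{·,·,·}` and `{·,·,·}_D`, with
`⟦x,y,z⟧_C = D(x,y)z + R(y,z)x - R(x,z)y`: the identity `A → A^c` is a relative Rota-Baxter
operator. The integrability of `J`, which exchanges the two copies of `A`, then follows by
expanding both sides by multilinearity; the pre-Lie-Yamaguti identities play no further role.
-/

/- Common definitions: Lie-Yamaguti algebras, representations, pre-Lie-Yamaguti algebras,
   product/complex/symplectic structures, etc. -/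

section LYDefs

variable (k : Type*) [Field k]

/-- A bilinear map, given as a plain function. -/
structure IsBilinMap {M N P : Type*} [AddCommGroup M] [Module k M] [AddCommGroup N] [Module k N]
    [AddCommGroup P] [Module k P] (f : M → N → P) : Prop where
  add₁ : ∀ (x y : M) (z : N), f (x + y) z = f x z + f y z
  smul₁ : ∀ (c : k) (x : M) (z : N), f (c • x) z = c • f x z
  add₂ : ∀ (x : M) (y z : N), f x (y + z) = f x y + f x z
  smul₂ : ∀ (c : k) (x : M) (y : N), f x (c • y) = c • f x y

/-- A trilinear map, given as a plain function. -/
structure IsTrilinMap {M N P Q : Type*} [AddCommGroup M] [Module k M] [AddCommGroup N] [Module k N]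
    [AddCommGroup P] [Module k P] [AddCommGroup Q] [Module k Q] (f : M → N → P → Q) : Prop where
  add₁ : ∀ (x y : M) (z : N) (w : P), f (x + y) z w = f x z w + f y z w
  smul₁ : ∀ (c : k) (x : M) (z : N) (w : P), f (c • x) z w = c • f x z w
  add₂ : ∀ (x : M) (y z : N) (w : P), f x (y + z) w = f x y w + f x z w
  smul₂ : ∀ (c : k) (x : M) (y : N) (w : P), f x (c • y) w = c • f x y w
  add₃ : ∀ (x : M) (y : N) (z w : P), f x y (z + w) = f x y z + f x y w
  smul₃ : ∀ (c : k) (x : M) (y : N) (z : P), f x y (c • z) = c • f x y z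

variable {k}

theorem IsBilinMap.right {M N P : Type*} [AddCommGroup M] [Module k M] [AddCommGroup N]
    [Module k N] [AddCommGroup P] [Module k P] {f : M → N → P} (h : IsBilinMap k f) (x : M) :
    IsLinearMap k (f x) :=
  ⟨h.add₂ x, fun c y => h.smul₂ c x y⟩

theorem IsTrilinMap.first {M N P Q : Type*} [AddCommGroup M] [Module k M] [AddCommGroup N]
    [Module k N] [AddCommGroup P] [Module k P] [AddCommGroup Q] [Module k Q]
    {f : M → N → P → Q} (h : IsTrilinMap k f) (y : N) (z : P) :
    IsLinearMap k (fun x => f x y z) :=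
  ⟨fun a b => h.add₁ a b y z, fun c a => h.smul₁ c a y z⟩

theorem IsTrilinMap.third {M N P Q : Type*} [AddCommGroup M] [Module k M] [AddCommGroup N]
    [Module k N] [AddCommGroup P] [Module k P] [AddCommGroup Q] [Module k Q]
    {f : M → N → P → Q} (h : IsTrilinMap k f) (x : M) (y : N) :
    IsLinearMap k (f x y) :=
  ⟨h.add₃ x y, fun c z => h.smul₃ c x y z⟩

variable (k)

/-- A Lie-Yamaguti algebra structure, given by a binary bracket `b` and a ternary bracket `t`. -/
structure IsLieYamaguti {g : Type*} [AddCommGroup g] [Module k g]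
    (b : g → g → g) (t : g → g → g → g) : Prop where
  bilin : IsBilinMap k b
  trilin : IsTrilinMap k t
  skew_b : ∀ x y, b x y = -b y x
  skew_t : ∀ x y z, t x y z = -t y x z
  ly1 : ∀ x y z, b (b x y) z + b (b y z) x + b (b z x) y + t x y z + t y z x + t z x y = 0
  ly2 : ∀ x y z w, t (b x y) z w + t (b y z) x w + t (b z x) y w = 0
  ly3 : ∀ x y z w, t x y (b z w) = b (t x y z) w + b z (t x y w)
  ly4 : ∀ x y z w u, t x y (t z w u) = t (t x y z) w u + t z (t x y w) u + t z w (t x y u)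

variable {k}

/-- The operator `D(x,y) = μ(y,x) - μ(x,y) + ρ(x)ρ(y) - ρ(y)ρ(x) - ρ([x,y])` of a
representation `(ρ, μ)`. -/
def LYD {g V : Type*} [AddCommGroup V] (b : g → g → g) (ρ : g → V → V) (μ : g → g → V → V)
    (x y : g) (v : V) : V :=
  μ y x v - μ x y v + ρ x (ρ y v) - ρ y (ρ x v) - ρ (b x y) v

variable (k)

/-- A representation `(ρ, μ)` of a Lie-Yamaguti algebra `(g, b, t)` on `V`. -/
structure IsLYRep {g V : Type*} [AddCommGroup g] [Module k g] [AddCommGroup V] [Module k V]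
    (b : g → g → g) (t : g → g → g → g) (ρ : g → V → V) (μ : g → g → V → V) : Prop where
  lin : IsBilinMap k ρ
  bilin : IsTrilinMap k μ
  r1 : ∀ x y z v, μ (b x y) z v - μ x z (ρ y v) + μ y z (ρ x v) = 0
  r2 : ∀ x y z v, μ x (b y z) v - ρ y (μ x z v) + ρ z (μ x y v) = 0
  r3 : ∀ x y z v, ρ (t x y z) v = LYD b ρ μ x y (ρ z v) - ρ z (LYD b ρ μ x y v)
  r4 : ∀ x y z w v,
    μ z w (μ x y v) - μ y w (μ x z v) - μ x (t y z w) v + LYD b ρ μ y z (μ x w v) = 0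
  r5 : ∀ x y z w v, μ (t x y z) w v + μ z (t x y w) v
    = LYD b ρ μ x y (μ z w v) - μ z w (LYD b ρ μ x y v)

variable {k}

/-- The binary bracket of the semidirect product Lie-Yamaguti algebra `g ⋉ V`. -/
def sdB {g V : Type*} [AddCommGroup V] (b : g → g → g) (ρ : g → V → V)
    (p q : g × V) : g × V :=
  (b p.1 q.1, ρ p.1 q.2 - ρ q.1 p.2)

/-- The ternary bracket of the semidirect product Lie-Yamaguti algebra `g ⋉ V`. -/
def sdT {g V : Type*} [AddCommGroup V] (b : g → g → g) (t : g → g → g → g)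
    (ρ : g → V → V) (μ : g → g → V → V) (p q r : g × V) : g × V :=
  (t p.1 q.1 r.1, LYD b ρ μ p.1 q.1 r.2 + μ q.1 r.1 p.2 - μ p.1 r.1 q.2)

/-- The associator of a bilinear product. -/
def preAssoc {A : Type*} [AddCommGroup A] (m : A → A → A) (x y z : A) : A :=
  m (m x y) z - m x (m y z)

/-- The bracket `{x,y,z}_D = {z,y,x} - {z,x,y} + (y,x,z) - (x,y,z)` of a
pre-Lie-Yamaguti algebra. -/
def preD {A : Type*} [AddCommGroup A] (m : A → A → A) (t : A → A → A → A) (x y z : A) : A :=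
  t z y x - t z x y + preAssoc m y x z - preAssoc m x y z

variable (k)

/-- A pre-Lie-Yamaguti algebra structure `(*, {·,·,·})` on `A`. -/
structure IsPreLieYamaguti {A : Type*} [AddCommGroup A] [Module k A]
    (m : A → A → A) (t : A → A → A → A) : Prop where
  bilin : IsBilinMap k m
  trilin : IsTrilinMap k t
  p1 : ∀ x y z w, t z (m x y - m y x) w - t (m y z) x w + t (m x z) y w = 0
  p2 : ∀ x y z w, t x y (m z w - m w z) = m z (t x y w) - m w (t x y z)
  p3 : ∀ x y z w u, t (t x y z) w u - t (t x y w) z u - t x y (preD m t z w u)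
        - t x y (t z w u) + t x y (t w z u) + preD m t z w (t x y u) = 0
  p4 : ∀ x y z w u, t z (preD m t x y w) u + t z (t x y w) u - t z (t y x w) u
        + t z w (preD m t x y u) + t z w (t x y u) - t z w (t y x u)
        = preD m t x y (t z w u) - t (preD m t x y z) w u
  p5 : ∀ x y z w, m (preD m t x y z) w + m (t x y z) w - m (t y x z) w
        = preD m t x y (m z w) - m z (preD m t x y w)

variable {k}

/-- The binary bracket `[x,y]_C = x*y - y*x` of the sub-adjacent Lie-Yamaguti algebra. -/
def subAdjB {A : Type*} [AddCommGroup A] (m : A → A → A) (x y : A) : A := m x y - m y x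

/-- The ternary bracket `⟦x,y,z⟧_C = {x,y,z}_D + {x,y,z} - {y,x,z}` of the sub-adjacent
Lie-Yamaguti algebra. -/
def subAdjT {A : Type*} [AddCommGroup A] (m : A → A → A) (t : A → A → A → A) (x y z : A) : A :=
  preD m t x y z + t x y z - t y x z

/-- A relative Rota-Baxter operator `T : V → g` on a Lie-Yamaguti algebra with respect to a
representation `(ρ, μ)`. -/
def IsRelRotaBaxter {g V : Type*} [AddCommGroup g] [AddCommGroup V]
    (b : g → g → g) (t : g → g → g → g) (ρ : g → V → V) (μ : g → g → V → V) (T : V → g) : Prop :=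
  (∀ u v, b (T u) (T v) = T (ρ (T u) v - ρ (T v) u)) ∧
  (∀ u v w, t (T u) (T v) (T w)
    = T (LYD b ρ μ (T u) (T v) w + μ (T v) (T w) u - μ (T u) (T w) v))

/-- The map `L*` of the dual representation of the representation `(L, R)` of the sub-adjacent
Lie-Yamaguti algebra of a pre-Lie-Yamaguti algebra:  `⟨L*(x)α, v⟩ = -⟨α, x*v⟩`. -/
def dualRho {g : Type*} [AddCommGroup g] [Module k g] {m : g → g → g}
    (h : IsBilinMap k m) (x : g) (α : Module.Dual k g) : Module.Dual k g :=
  -(α.comp (IsLinearMap.mk' (m x) (h.right x)))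

/-- The map `-R*τ` of the dual representation of the representation `(L, R)` of the sub-adjacent
Lie-Yamaguti algebra of a pre-Lie-Yamaguti algebra:  `⟨(-R*τ)(x,y)α, v⟩ = ⟨α, {v,y,x}⟩`. -/
def dualMu {g : Type*} [AddCommGroup g] [Module k g] {t : g → g → g → g}
    (h : IsTrilinMap k t) (x y : g) (α : Module.Dual k g) : Module.Dual k g :=
  α.comp (IsLinearMap.mk' (fun v => t v y x) (h.first y x))

/-- The isomorphism `B^♯ : g → g*`, `⟨B^♯(x), y⟩ = B(x,y)`, induced by a bilinear form `B`. -/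
def bsharp {g : Type*} [AddCommGroup g] [Module k g] {B : g → g → k}
    (hB : IsBilinMap k B) (x : g) : Module.Dual k g :=
  IsLinearMap.mk' (B x) (hB.right x)

variable (k)

/-- A product structure on a Lie-Yamaguti algebra: a linear involution `E ≠ ± id` satisfying
the integrability conditions. -/
structure IsProductStructure {g : Type*} [AddCommGroup g] [Module k g]
    (b : g → g → g) (t : g → g → g → g) (E : g → g) : Prop where
  lin : IsLinearMap k E
  invol : ∀ x, E (E x) = x
  ne_id : E ≠ id
  ne_neg_id : E ≠ fun x => -x
  integ_b : ∀ x y, b (E x) (E y) = E (b (E x) y) + E (b x (E y)) - b x y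
  integ_t : ∀ x y z, t (E x) (E y) (E z) =
      E (t (E x) (E y) z) + E (t x (E y) (E z)) + E (t (E x) y (E z))
      - t (E x) y z - t x (E y) z - t x y (E z) + E (t x y z)

variable {k}

/-- The eigenspace of a linear map `E` for the eigenvalue `c`. -/
def eigenspaceOf {g : Type*} [AddCommGroup g] [Module k g] {E : g → g}
    (hE : IsLinearMap k E) (c : k) : Submodule k g :=
  LinearMap.ker (IsLinearMap.mk' E hE - c • LinearMap.id)

variable (k)

/-- A paracomplex structure: a product structure whose `±1`-eigenspaces have the same
dimension. -/
structure IsParacomplex {g : Type*} [AddCommGroup g] [Module k g]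
    (b : g → g → g) (t : g → g → g → g) (E : g → g) : Prop where
  prod : IsProductStructure k b t E
  dim_eq : Module.finrank k (eigenspaceOf prod.lin 1)
    = Module.finrank k (eigenspaceOf prod.lin (-1))

variable {k}

/-- `E` is perfect: it commutes with both brackets. -/
def IsPerfectMap {g : Type*} (b : g → g → g) (t : g → g → g → g) (E : g → g) : Prop :=
  (∀ x y, E (b x y) = b (E x) (E y)) ∧ (∀ x y z, E (t x y z) = t (E x) (E y) (E z))

variable (k)

/-- A complex structure on a (real) Lie-Yamaguti algebra. -/
structure IsComplexStructure {g : Type*} [AddCommGroup g] [Module k g]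
    (b : g → g → g) (t : g → g → g → g) (J : g → g) : Prop where
  lin : IsLinearMap k J
  invol : ∀ x, J (J x) = -x
  integ_b : ∀ x y, b (J x) (J y) = J (b (J x) y) + J (b x (J y)) + b x y
  integ_t : ∀ x y z, J (t x y z) =
      -t (J x) (J y) (J z) + t (J x) y z + t x (J y) z + t x y (J z)
      + J (t (J x) (J y) z) + J (t (J x) y (J z)) + J (t x (J y) (J z))

/-- A complex product structure `(J, E)`: a complex structure `J` and a product structure `E`
which anticommute. -/
def IsComplexProductStructure {g : Type*} [AddCommGroup g] [Module k g]
    (b : g → g → g) (t : g → g → g → g) (J E : g → g) : Prop :=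
  IsComplexStructure k b t J ∧ IsProductStructure k b t E ∧ ∀ x, E (J x) = -J (E x)

/-- A perfect complex product structure. -/
def IsPerfectComplexProductStructure {g : Type*} [AddCommGroup g] [Module k g]
    (b : g → g → g) (t : g → g → g → g) (J E : g → g) : Prop :=
  IsComplexProductStructure k b t J E ∧ IsPerfectMap b t E

/-- A symplectic structure on a Lie-Yamaguti algebra. -/
structure IsSymplectic {g : Type*} [AddCommGroup g] [Module k g]
    (b : g → g → g) (t : g → g → g → g) (ω : g → g → k) : Prop where
  bilin : IsBilinMap k ω
  skew : ∀ x y, ω x y = -ω y x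
  nondeg : ∀ x, (∀ y, ω x y = 0) → x = 0
  c1 : ∀ x y z, ω x (b y z) + ω y (b z x) + ω z (b x y) = 0
  c2 : ∀ x y z w, ω z (t x y w) - ω x (t w z y) + ω y (t w z x) - ω w (t x y z) = 0

/-- A para-Kähler structure `(ω, E)` on a Lie-Yamaguti algebra. -/
def IsParaKahler {g : Type*} [AddCommGroup g] [Module k g]
    (b : g → g → g) (t : g → g → g → g) (ω : g → g → k) (E : g → g) : Prop :=
  IsSymplectic k b t ω ∧ IsParacomplex k b t E ∧ ∀ x y, ω (E x) (E y) = -ω x y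

/-- A pseudo-Kähler structure `(ω, J)` on a (real) Lie-Yamaguti algebra. -/
def IsPseudoKahler {g : Type*} [AddCommGroup g] [Module k g]
    (b : g → g → g) (t : g → g → g → g) (ω : g → g → k) (J : g → g) : Prop :=
  IsSymplectic k b t ω ∧ IsComplexStructure k b t J ∧ ∀ x y, ω (J x) (J y) = ω x y

variable {k}

/-- `E` is abelian: the two brackets vanish on each eigenspace of `E` (equational
characterization). -/
def IsAbelianProduct {g : Type*} [AddCommGroup g] (b : g → g → g) (t : g → g → g → g)
    (E : g → g) : Prop :=
  (∀ x y, b (E x) y = -b x (E y)) ∧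
  (∀ x y z, t (E x) y z + t x (E y) z + t x y (E z) + t (E x) (E y) (E z) = 0)

end LYDefs

/-- For the representation `(L, R)` of the sub-adjacent algebra, the operator `D` is
`{·,·,·}_D`. -/
theorem lyd_eq_preD {A : Type*} [AddCommGroup A] [Module ℝ A]
    {m : A → A → A} (t : A → A → A → A) (hm : IsBilinMap ℝ m) (x y z : A) :
    LYD (subAdjB m) (fun x z => m x z) (fun x y z => t z x y) x y z = preD m t x y z := by
  have h1 : m (m x y - m y x) z = m (m x y) z - m (m y x) z := by
    rw [eq_sub_iff_add_eq, ← hm.add₁, sub_add_cancel]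
  simp only [LYD, subAdjB, preD, preAssoc, h1]
  abel

theorem IsBilinMap.neg₁ {A : Type*} [AddCommGroup A] [Module ℝ A] {m : A → A → A}
    (hm : IsBilinMap ℝ m) (x y : A) : m (-x) y = -m x y := by
  simpa using hm.smul₁ (-1) x y

theorem IsBilinMap.neg₂ {A : Type*} [AddCommGroup A] [Module ℝ A] {m : A → A → A}
    (hm : IsBilinMap ℝ m) (x y : A) : m x (-y) = -m x y := by
  simpa using hm.smul₂ (-1) x y

theorem IsTrilinMap.neg₁ {A : Type*} [AddCommGroup A] [Module ℝ A] {t : A → A → A → A}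
    (ht : IsTrilinMap ℝ t) (x y z : A) : t (-x) y z = -t x y z := by
  simpa using ht.smul₁ (-1) x y z

theorem IsTrilinMap.neg₂ {A : Type*} [AddCommGroup A] [Module ℝ A] {t : A → A → A → A}
    (ht : IsTrilinMap ℝ t) (x y z : A) : t x (-y) z = -t x y z := by
  simpa using ht.smul₂ (-1) x y z

theorem IsTrilinMap.neg₃ {A : Type*} [AddCommGroup A] [Module ℝ A] {t : A → A → A → A}
    (ht : IsTrilinMap ℝ t) (x y z : A) : t x y (-z) = -t x y z := by
  simpa using ht.smul₃ (-1) x y z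

/-- Only the compatibility of `{·,·,·}_D` with signs is needed: the operators `J` and `E` are
given by sign changes and permutations of coordinates. -/
theorem preD_neg {A : Type*} [AddCommGroup A] [Module ℝ A] {m : A → A → A}
    {t : A → A → A → A} (hm : IsBilinMap ℝ m) (ht : IsTrilinMap ℝ t) (x y z : A) :
    preD m t (-x) y z = -preD m t x y z ∧ preD m t x (-y) z = -preD m t x y z ∧
      preD m t x y (-z) = -preD m t x y z := by
  refine ⟨?_, ?_, ?_⟩ <;>
  · simp only [preD, preAssoc, hm.neg₁, hm.neg₂, ht.neg₁, ht.neg₂, ht.neg₃]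
    abel

/-- On `aff(A) = A^c ⋉_{L,R} A` for a real pre-Lie-Yamaguti algebra `A`, the pair
`J(x,y) = (-y,x)`, `E(x,y) = (x,-y)` is a perfect complex product structure. -/
theorem statement9 {A : Type*} [AddCommGroup A] [Module ℝ A] [Nontrivial A]
    (m : A → A → A) (t : A → A → A → A) (h : IsPreLieYamaguti ℝ m t) :
    IsPerfectComplexProductStructure ℝ
      (sdB (subAdjB m) (fun x z => m x z))
      (sdT (subAdjB m) (subAdjT m t) (fun x z => m x z) (fun x y z => t z x y))
      (fun p : A × A => (-p.2, p.1))
      (fun p : A × A => (p.1, -p.2)) := by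
  have hm := h.bilin
  have ht := h.trilin
  have d1 := fun x y z => (preD_neg hm ht x y z).1
  have d2 := fun x y z => (preD_neg hm ht x y z).2.1
  have d3 := fun x y z => (preD_neg hm ht x y z).2.2
  obtain ⟨a, ha⟩ := exists_ne (0 : A)
  have ha' : -a ≠ a := fun e => by
    have h2 : (2 : ℝ) • a = 0 := by rw [two_smul]; nth_rewrite 1 [← e]; exact neg_add_cancel a
    exact ha ((smul_eq_zero.1 h2).resolve_left two_ne_zero)
  refine ⟨⟨⟨⟨?_, ?_⟩, ?_, ?_, ?_⟩, ⟨⟨?_, ?_⟩, ?_, ?_, ?_, ?_, ?_⟩, ?_⟩, ?_, ?_⟩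
  -- linearity of `J`, `J² = -1` and integrability of `J`
  · rintro ⟨x, u⟩ ⟨y, v⟩
    ext <;> simp only [Prod.fst_add, Prod.snd_add]
    abel
  · rintro c ⟨x, u⟩
    ext <;> simp
  · rintro ⟨x, u⟩
    rfl
  · rintro ⟨x, u⟩ ⟨y, v⟩
    ext <;> simp only [sdB, subAdjB, hm.neg₁, hm.neg₂, Prod.fst_add, Prod.snd_add] <;> abel
  · rintro ⟨x, u⟩ ⟨y, v⟩ ⟨z, w⟩
    ext <;> simp only [sdT, lyd_eq_preD t hm, subAdjT, ht.neg₁, ht.neg₂, ht.neg₃, d1, d2, d3,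
      Prod.fst_add, Prod.snd_add, Prod.fst_neg, Prod.snd_neg] <;> abel
  -- linearity of `E`, `E² = 1`, `E ≠ ±1` and integrability of `E`
  · rintro ⟨x, u⟩ ⟨y, v⟩
    ext <;> simp only [Prod.fst_add, Prod.snd_add]
    abel
  · rintro c ⟨x, u⟩
    ext <;> simp
  · rintro ⟨x, u⟩
    simp
  · intro e
    exact ha' (congrArg Prod.snd (congrFun e (a, a)))
  · intro e
    exact ha' (congrArg Prod.fst (congrFun e (a, a))).symm
  · rintro ⟨x, u⟩ ⟨y, v⟩
    ext <;> simp only [sdB, subAdjB, hm.neg₂, Prod.fst_add, Prod.snd_add,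
      Prod.fst_sub, Prod.snd_sub] <;> abel
  · rintro ⟨x, u⟩ ⟨y, v⟩ ⟨z, w⟩
    ext <;> simp only [sdT, lyd_eq_preD t hm, subAdjT, ht.neg₁, d3,
      Prod.fst_add, Prod.snd_add, Prod.fst_sub, Prod.snd_sub] <;> abel
  -- `E` anticommutes with `J` and preserves both brackets
  · rintro ⟨x, u⟩
    ext <;> simp
  · rintro ⟨x, u⟩ ⟨y, v⟩
    ext <;> simp only [sdB, hm.neg₂]
    abel
  · rintro ⟨x, u⟩ ⟨y, v⟩ ⟨z, w⟩
    ext <;> simp only [sdT, lyd_eq_preD t hm, ht.neg₁, d3]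
    abel
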